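/- arXiv:2304.11211 — 5 statements merged into one kernel-verified Lean document; each statement's English description precedes it below -/
import Mathlib

section
/- Let L = (L₁, …, L_r) be a frame for E and let v be a valuation on E. Then v is adapted to L (i.e., every subspace E_{v≥a}, a ∈ ℝ, is a sum of some of the L_i) if and only if for every e ∈ E, writing e = Σᵢ e_i with e_i ∈ L_i, one has v(e) = min{v(e_i) : i = 1, …, r} (equivalently, v(e) = min{v(e_i) : e_i ≠ 0} for e ≠ 0). -/
/-!
By the ultrametric inequality, `v (∑ cᵢ) = min v (cᵢ)` says exactly that each `E_{v ≥ t}` containing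
`∑ cᵢ` contains all the `cᵢ`. So the theorem reduces to a fact about a single subspace `F`: it is a
sum of some of the `Lᵢ` if and only if it contains the components of each of its elements. One
direction is the independence of the `Lᵢ`; for the other, a nonzero component in `F ∩ Lᵢ` forces
`Lᵢ ≤ F` because `Lᵢ` is simple.
-/

/-- A valuation on a `K`-vector space `E` with values in `ℝ ∪ {∞}`. -/
def IsVSValuation (K : Type*) {E : Type*} [Field K] [AddCommGroup E] [Module K E]
    (v : E → WithTop ℝ) : Prop :=
  (∀ (c : K) (e : E), c ≠ 0 → v (c • e) = v e) ∧
  (∀ e₁ e₂ : E, min (v e₁) (v e₂) ≤ v (e₁ + e₂)) ∧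
  (∀ e : E, v e = ⊤ ↔ e = 0)

/-- A frame for `E`: a family of one-dimensional subspaces whose internal direct sum is `E`. -/
def IsFrame (K : Type*) {E : Type*} [Field K] [AddCommGroup E] [Module K E]
    {r : ℕ} (L : Fin r → Submodule K E) : Prop :=
  (∀ i, Module.finrank K (L i) = 1) ∧ iSupIndep L ∧ (⨆ i, L i) = ⊤

/-- A valuation `v` is adapted to a frame `L` if every subspace `E_{v ≥ t}`, `t ∈ ℝ`,
is a sum of some of the `L i`. -/
def IsAdapted {K E : Type*} [Field K] [AddCommGroup E] [Module K E]
    {r : ℕ} (v : E → WithTop ℝ) (L : Fin r → Submodule K E) : Prop :=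
  ∀ t : ℝ, ∃ s : Finset (Fin r),
    {e : E | (t : WithTop ℝ) ≤ v e} = ((⨆ i ∈ s, L i : Submodule K E) : Set E)

section Homogeneous

variable {R M ι : Type*} [Ring R] [AddCommGroup M] [Module R M] {L : ι → Submodule R M}
  {F : Submodule R M}

/-- A submodule `F` is homogeneous for a family `L` of submodules if it contains the terms of each
finite sum `∑ cᵢ ∈ F` with `cᵢ ∈ L i`. When `M` is the direct sum of the `L i`, this is homogeneity
for the corresponding `ι`-grading of `M`. -/
def IsHomogeneousFor (L : ι → Submodule R M) (F : Submodule R M) : Prop :=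
  ∀ (s : Finset ι) (c : ι → M), (∀ i ∈ s, c i ∈ L i) → ∑ i ∈ s, c i ∈ F → ∀ i ∈ s, c i ∈ F

theorem isHomogeneousFor_biSup (hL : iSupIndep L) (T : Set ι) :
    IsHomogeneousFor L (⨆ i ∈ T, L i) := by
  classical
  intro s c hc hsum i hi
  by_cases hiT : i ∈ T
  · exact Submodule.mem_iSup_of_mem i (Submodule.mem_iSup_of_mem hiT (hc i hi))
  have hT_le : ⨆ j ∈ T, L j ≤ ⨆ j ≠ i, L j :=
    biSup_mono fun _ hj => ne_of_mem_of_not_mem hj hiT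
  have hrest : ∑ j ∈ s.erase i, c j ∈ ⨆ j ≠ i, L j :=
    sum_mem fun j hj => Submodule.mem_iSup_of_mem j <|
      Submodule.mem_iSup_of_mem (Finset.ne_of_mem_erase hj) (hc j (Finset.mem_of_mem_erase hj))
  have hci : c i ∈ ⨆ j ≠ i, L j := by
    rw [← add_sub_cancel_right (c i) (∑ j ∈ s.erase i, c j), Finset.add_sum_erase s c hi]
    exact sub_mem (hT_le hsum) hrest
  rw [Submodule.disjoint_def.1 (hL i) (c i) (hc i hi) hci]
  exact zero_mem _

theorem IsHomogeneousFor.eq_biSup (hF : IsHomogeneousFor L F) (hatom : ∀ i, IsAtom (L i))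
    (htop : ⨆ i, L i = ⊤) : F = ⨆ i ∈ {i | L i ≤ F}, L i := by
  refine le_antisymm (fun x hx => ?_) (iSup₂_le fun _ hi => hi)
  obtain ⟨c, hc, rfl⟩ :=
    (Submodule.mem_iSup_iff_exists_finsupp L x).1 (htop ▸ Submodule.mem_top)
  refine sum_mem fun i hi => ?_
  have hciF : c i ∈ F := hF c.support c (fun j _ => hc j) hx i hi
  have hLF : L i ≤ F := (hatom i).not_disjoint_iff_le.1 fun hdisj =>
    Finsupp.mem_support_iff.1 hi (Submodule.disjoint_def.1 hdisj (c i) (hc i) hciF)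
  exact Submodule.mem_iSup_of_mem i (Submodule.mem_iSup_of_mem hLF (hc i))

theorem exists_eq_biSup_iff_isHomogeneousFor (hatom : ∀ i, IsAtom (L i)) (hind : iSupIndep L)
    (htop : ⨆ i, L i = ⊤) : (∃ T : Set ι, F = ⨆ i ∈ T, L i) ↔ IsHomogeneousFor L F := by
  refine ⟨?_, fun hF => ⟨_, hF.eq_biSup hatom htop⟩⟩
  rintro ⟨T, rfl⟩
  exact isHomogeneousFor_biSup hind T

end Homogeneous

/-- A semivaluation on an `R`-module: the sets `{x | t ≤ v x}` are submodules, but nonzero elements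
may have value `⊤`. Invariance under nonzero scalars is weakened to an inequality, which is what
makes sense over a ring with non-invertible elements. -/
structure IsSemivaluation (R : Type*) {M Γ : Type*} [Ring R] [AddCommGroup M] [Module R M]
    [SemilatticeInf Γ] (v : M → WithTop Γ) : Prop where
  map_zero : v 0 = ⊤
  le_map_smul (a : R) (x : M) : v x ≤ v (a • x)
  inf_le_map_add (x y : M) : v x ⊓ v y ≤ v (x + y)

namespace IsSemivaluation

variable {R M Γ ι : Type*} [Ring R] [AddCommGroup M] [Module R M] [SemilatticeInf Γ]
  {v : M → WithTop Γ}

/-- The submodule `M_{v ≥ t}` of elements of value at least `t`. -/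
def superlevel (hv : IsSemivaluation R v) (t : Γ) : Submodule R M where
  carrier := {x | t ≤ v x}
  zero_mem' := le_top.trans_eq hv.map_zero.symm
  add_mem' hx hy := (le_inf hx hy).trans (hv.inf_le_map_add _ _)
  smul_mem' a x hx := le_trans hx (hv.le_map_smul a x)

theorem inf_le_map_sum (hv : IsSemivaluation R v) (s : Finset ι) (c : ι → M) :
    s.inf (fun i => v (c i)) ≤ v (∑ i ∈ s, c i) := by
  classical
  induction s using Finset.induction_on with
  | empty => simp [hv.map_zero]
  | insert i s hi ih =>
    rw [Finset.inf_insert, Finset.sum_insert hi]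
    exact (inf_le_inf_left _ ih).trans (hv.inf_le_map_add _ _)

theorem map_sum_eq_inf_iff [NoTopOrder Γ] (hv : IsSemivaluation R v) (s : Finset ι) (c : ι → M) :
    v (∑ i ∈ s, c i) = s.inf (fun i => v (c i)) ↔
      ∀ t : Γ, ∑ i ∈ s, c i ∈ hv.superlevel t → ∀ i ∈ s, c i ∈ hv.superlevel t := by
  rw [le_antisymm_iff, and_iff_left (hv.inf_le_map_sum s c), ← WithTop.forall_coe_le_iff_le]
  simp only [Finset.le_inf_iff]
  rfl

theorem forall_isHomogeneousFor_superlevel_iff [NoTopOrder Γ] (hv : IsSemivaluation R v)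
    (L : ι → Submodule R M) :
    (∀ t, IsHomogeneousFor L (hv.superlevel t)) ↔
      ∀ (s : Finset ι) (c : ι → M), (∀ i ∈ s, c i ∈ L i) →
        v (∑ i ∈ s, c i) = s.inf fun i => v (c i) := by
  simp only [hv.map_sum_eq_inf_iff]
  exact ⟨fun h s c hc t => h t s c hc, fun h t s c hc => h s c hc t⟩

end IsSemivaluation

theorem forall_map_sum_eq_inf_iff_univ {M Γ ι : Type*} [Fintype ι] [AddCommMonoid M]
    [SemilatticeInf Γ] [OrderTop Γ] {S : Type*} [SetLike S M] [ZeroMemClass S M] (L : ι → S)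
    {v : M → Γ} (h0 : v 0 = ⊤) :
    (∀ (s : Finset ι) (c : ι → M), (∀ i ∈ s, c i ∈ L i) →
        v (∑ i ∈ s, c i) = s.inf fun i => v (c i)) ↔
      ∀ c : ι → M, (∀ i, c i ∈ L i) → v (∑ i, c i) = Finset.univ.inf fun i => v (c i) := by
  classical
  refine ⟨fun h c hc => h Finset.univ c fun i _ => hc i, fun h s c hc => ?_⟩
  have hext : ∀ i, (if i ∈ s then c i else 0) ∈ L i := fun i => by
    split_ifs with hi
    exacts [hc i hi, zero_mem _]
  simpa [apply_ite v, h0, Finset.inf_ite] using h _ hext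

theorem IsVSValuation.isSemivaluation {K E : Type*} [Field K] [AddCommGroup E] [Module K E]
    {v : E → WithTop ℝ} (hv : IsVSValuation K v) : IsSemivaluation K v where
  map_zero := (hv.2.2 0).2 rfl
  le_map_smul a x := by
    rcases eq_or_ne a 0 with rfl | ha
    · rw [zero_smul, (hv.2.2 0).2 rfl]
      exact le_top
    · exact (hv.1 a x ha).ge
  inf_le_map_add := hv.2.1

theorem isAdapted_iff_exists_set {K E : Type*} [Field K] [AddCommGroup E] [Module K E]
    {r : ℕ} {v : E → WithTop ℝ} {L : Fin r → Submodule K E} :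
    IsAdapted v L ↔ ∀ t : ℝ, ∃ T : Set (Fin r),
      {e : E | (t : WithTop ℝ) ≤ v e} = ((⨆ i ∈ T, L i : Submodule K E) : Set E) :=
  forall_congr' fun _ => Fintype.finsetEquivSet.exists_congr fun _ => Iff.rfl

theorem stmt4_general {R M Γ ι : Type*} [Ring R] [AddCommGroup M] [Module R M]
    [SemilatticeInf Γ] [NoTopOrder Γ] {L : ι → Submodule R M} (hatom : ∀ i, IsAtom (L i))
    (hind : iSupIndep L) (htop : ⨆ i, L i = ⊤) {v : M → WithTop Γ} (hv : IsSemivaluation R v) :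
    (∀ t : Γ, ∃ T : Set ι, {x : M | t ≤ v x} = ((⨆ i ∈ T, L i : Submodule R M) : Set M)) ↔
      ∀ (s : Finset ι) (c : ι → M), (∀ i ∈ s, c i ∈ L i) →
        v (∑ i ∈ s, c i) = s.inf fun i => v (c i) := by
  rw [← hv.forall_isHomogeneousFor_superlevel_iff]
  refine forall_congr' fun t => ?_
  rw [← exists_eq_biSup_iff_isHomogeneousFor hatom hind htop]
  exact exists_congr fun T => SetLike.coe_set_eq (p := hv.superlevel t)

/-- A valuation `v` on `E` is adapted to a frame `L = (L₁, …, L_r)` if and only if for every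
`e = Σᵢ eᵢ` with `eᵢ ∈ Lᵢ` one has `v e = min {v eᵢ : i = 1, …, r}`. -/
theorem stmt4 (K E : Type*) [Field K] [AddCommGroup E] [Module K E] [FiniteDimensional K E]
    (r : ℕ) (hr : Module.finrank K E = r)
    (L : Fin r → Submodule K E) (hL : IsFrame K L)
    (v : E → WithTop ℝ) (hv : IsVSValuation K v) :
    IsAdapted v L ↔
      ∀ c : Fin r → E, (∀ i, c i ∈ L i) →
        v (∑ i, c i) = Finset.univ.inf fun i => v (c i) :=
  isAdapted_iff_exists_set.trans <|
    (stmt4_general (fun i => Submodule.isAtom_iff_finrank_eq_one.2 (hL.1 i)) hL.2.1 hL.2.2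
      hv.isSemivaluation).trans (forall_map_sum_eq_inf_iff_univ L hv.isSemivaluation.map_zero)
end

section
/- Given any two flags of subspaces in E, there exists a frame for E such that both flags are adapted to it; that is, for flags {0} ⊊ F₁ ⊊ ⋯ ⊊ F_k = E and {0} ⊊ F'₁ ⊊ ⋯ ⊊ F'_m = E there is a family L = (L₁, …, L_r) of 1-dimensional subspaces with E = ⊕ᵢ L_i such that every F_j and every F'_j is a sum of some of the L_i. -/
/-!
Well-order the vectors of `E` lexicographically: first by their level in the filtration `F'`, then
by their level in `F`, then by an arbitrary well-order. The vectors that are not in the span of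
their predecessors form a basis. Every `F' j` is an initial segment, so this basis is adapted to
`F'`. It is adapted to `F` as well: if `x ∈ F i` is in the span of its predecessors, then the
predecessors of the same `F'`-level as `x` already lie in `F i`, so the contribution to `x` of those
of smaller `F'`-level is a vector of `F i` of smaller `F'`-level.
-/

open Submodule

section GreedyBasis

variable (K : Type*) {E α : Type*} [Semiring K] [AddCommMonoid E] [Module K E] [LinearOrder α]

/-- The greedy basis of `E` for the order pulled back along `f : E → α`: the vectors outside the
span of their strict predecessors. It is a basis when `f` is injective and `α` is well-ordered. -/
def greedyBasis (f : E → α) : Set E :=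
  {x | x ∉ span K {y | f y < f x}}

variable {K}

theorem span_greedyBasis_inter [WellFoundedLT α] {f : E → α} {W : Submodule K E}
    (hW : ∀ x ∈ W, x ∈ span K {y | f y < f x} → x ∈ span K {y | y ∈ W ∧ f y < f x}) :
    span K (greedyBasis K f ∩ W) = W := by
  refine le_antisymm (span_le.2 Set.inter_subset_right) fun x hx ↦ ?_
  induction x using (InvImage.wf f wellFounded_lt).induction with
  | h x ih =>
    by_cases hxB : x ∈ greedyBasis K f
    · exact subset_span ⟨hxB, hx⟩
    · exact span_le.2 (fun y hy ↦ ih y hy.2 hy.1) (hW x hx (not_not.1 hxB))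

end GreedyBasis

theorem linearIndepOn_greedyBasis {K E α : Type*} [DivisionRing K] [AddCommGroup E] [Module K E]
    [LinearOrder α] {f : E → α} (hf : f.Injective) : LinearIndepOn K id (greedyBasis K f) := by
  classical
  refine linearIndepOn_iff_linearIndepOn_finset.2 fun t ↦ ?_
  induction t using Finset.induction_on_max_value f with
  | empty => simp
  | insert x s hxs hmax ih =>
    intro hsub
    rw [Finset.coe_insert, Set.insert_subset_iff] at hsub
    obtain ⟨hx, hs⟩ := hsub
    have hlt : (s : Set E) ⊆ {y | f y < f x} := fun y hy ↦
      (hmax y hy).lt_of_ne (hf.ne (ne_of_mem_of_not_mem hy hxs))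
    rw [Finset.coe_insert]
    exact (ih hs).id_insert fun h ↦ hx (span_mono hlt h)

section Level

variable {K E ι : Type*} [Semiring K] [AddCommMonoid E] [Module K E] [LinearOrder ι]

/-- `ν` is the level function of the filtration `F`: the level of `x` is the least index `i` with
`x ∈ F i`. Such a `ν` exists only if `F` is monotone and exhaustive. -/
def IsLevel (F : ι → Submodule K E) (ν : E → ι) : Prop :=
  ∀ x i, x ∈ F i ↔ ν x ≤ i

theorem exists_isLevel [WellFoundedLT ι] {F : ι → Submodule K E} (hF : Monotone F)
    (hexh : ∀ x, ∃ i, x ∈ F i) : ∃ ν, IsLevel F ν := by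
  choose ν hmem hmin using fun x ↦ wellFounded_lt.has_min {i | x ∈ F i} (hexh x)
  exact ⟨ν, fun x i ↦ ⟨fun hx ↦ not_lt.1 (hmin x i hx), fun hi ↦ hF hi (hmem x)⟩⟩

-- Adjoining `E` as a top member makes any filtration exhaustive.
theorem exists_isLevel_recTopCoe [WellFoundedLT ι] {F : ι → Submodule K E} (hF : Monotone F) :
    ∃ ν : E → WithTop ι, IsLevel (WithTop.recTopCoe ⊤ F) ν :=
  exists_isLevel (WithTop.monotone_iff.2 ⟨hF, fun _ ↦ le_top⟩) fun _ ↦ ⟨⊤, mem_top⟩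

theorem IsLevel.eq_zero_or_lt_of_mem_span {F : ι → Submodule K E} {ν : E → ι} (hν : IsLevel F ν)
    {a : ι} {x : E} (hx : x ∈ span K {y | ν y < a}) : x = 0 ∨ ν x < a := by
  induction hx using span_induction with
  | mem x hx => exact Or.inr hx
  | zero => exact Or.inl rfl
  | add x y _ _ hx hy =>
    rcases hx with rfl | hx
    · simpa only [zero_add] using hy
    rcases hy with rfl | hy
    · exact Or.inr (by simpa only [add_zero] using hx)
    have hadd : ν (x + y) ≤ max (ν x) (ν y) := (hν _ _).1 <|
      add_mem ((hν _ _).2 (le_max_left _ _)) ((hν _ _).2 (le_max_right _ _))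
    exact Or.inr (hadd.trans_lt (max_lt hx hy))
  | smul c x _ hx =>
    rcases hx with rfl | hx
    · exact Or.inl (smul_zero c)
    have hsmul : ν (c • x) ≤ ν x := (hν _ _).1 (smul_mem _ c ((hν _ _).2 le_rfl))
    exact Or.inr (hsmul.trans_lt hx)

end Level

section LexLevel

variable {ι ι' E : Type*}

/-- The rank of a vector in the lexicographic order by `ν'`-level, then `ν`-level, then the order of
`E`, which only serves to break ties. Its greedy basis is adapted to both filtrations. -/
def lexLevel (ν' : E → ι') (ν : E → ι) (x : E) : ι' ×ₗ ι ×ₗ E :=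
  toLex (ν' x, toLex (ν x, x))

theorem lexLevel_injective (ν' : E → ι') (ν : E → ι) : (lexLevel ν' ν).Injective :=
  fun _ _ h ↦ congrArg (fun p ↦ (ofLex (ofLex p).2).2) h

variable [LinearOrder ι] [LinearOrder ι'] [LinearOrder E]

theorem le_of_lexLevel_lt {ν' : E → ι'} {ν : E → ι} {x y : E}
    (h : lexLevel ν' ν y < lexLevel ν' ν x) : ν' y ≤ ν' x :=
  Prod.Lex.monotone_fst _ _ h.le

theorem lexLevel_lt_of_lt {ν' : E → ι'} (ν : E → ι) {x y : E} (h : ν' y < ν' x) :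
    lexLevel ν' ν y < lexLevel ν' ν x :=
  Prod.Lex.toLex_lt_toLex.2 (Or.inl h)

theorem lt_or_le_of_lexLevel_lt {ν' : E → ι'} {ν : E → ι} {x y : E}
    (h : lexLevel ν' ν y < lexLevel ν' ν x) : ν' y < ν' x ∨ ν y ≤ ν x :=
  (Prod.Lex.toLex_lt_toLex.1 h).imp id fun h ↦ Prod.Lex.monotone_fst _ _ h.2.le

end LexLevel

section AdaptedBasis

variable {K E ι ι' : Type*} [Ring K] [AddCommGroup E] [Module K E]
  [LinearOrder ι] [WellFoundedLT ι] [LinearOrder ι'] [WellFoundedLT ι']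
  [LinearOrder E] [WellFoundedLT E]

theorem span_greedyBasis_lexLevel_inter_left {F' : ι' → Submodule K E} {ν' : E → ι'}
    (hν' : IsLevel F' ν') (ν : E → ι) (j : ι') :
    span K (greedyBasis K (lexLevel ν' ν) ∩ F' j) = F' j := by
  refine span_greedyBasis_inter fun x hx hspan ↦ span_mono (fun y hy ↦ ?_) hspan
  exact ⟨(hν' y j).2 ((le_of_lexLevel_lt hy).trans ((hν' x j).1 hx)), hy⟩

theorem span_greedyBasis_lexLevel_inter_right {F' : ι' → Submodule K E} {ν' : E → ι'}
    (hν' : IsLevel F' ν') {F : ι → Submodule K E} {ν : E → ι} (hν : IsLevel F ν) (i : ι) :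
    span K (greedyBasis K (lexLevel ν' ν) ∩ F i) = F i := by
  refine span_greedyBasis_inter fun x hx hspan ↦ ?_
  set f := lexLevel ν' ν
  have hsplit : {y | f y < f x} ⊆ {y | ν' y < ν' x} ∪ {y | y ∈ F i ∧ f y < f x} := fun y hy ↦
    (lt_or_le_of_lexLevel_lt hy).imp id fun h ↦ ⟨(hν y i).2 (h.trans ((hν x i).1 hx)), hy⟩
  have hmem := span_mono hsplit hspan
  rw [span_union] at hmem
  obtain ⟨w, hw, u, hu, rfl⟩ := mem_sup.1 hmem
  have huF : u ∈ F i := span_le.2 (fun y hy ↦ hy.1) hu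
  have hwF : w ∈ F i := ((F i).add_mem_iff_left huF).1 hx
  refine add_mem ?_ hu
  rcases hν'.eq_zero_or_lt_of_mem_span hw with rfl | hlt
  · exact zero_mem _
  · exact subset_span ⟨hwF, lexLevel_lt_of_lt ν hlt⟩

end AdaptedBasis

theorem span_range_inter_eq_iSup {K E κ : Type*} [Semiring K] [AddCommMonoid E] [Module K E]
    (v : κ → E) (W : Submodule K E) :
    span K (Set.range v ∩ W) = ⨆ (k) (_ : v k ∈ W), span K {v k} := by
  rw [Set.inter_comm, ← Set.image_preimage_eq_inter_range, span_eq_iSup_of_singleton_spans,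
    iSup_image]
  rfl

theorem isFrame_span_singleton {K E : Type*} [Field K] [AddCommGroup E] [Module K E] {r : ℕ}
    (b : Module.Basis (Fin r) K E) : IsFrame K fun i ↦ span K {b i} :=
  ⟨fun i ↦ finrank_span_singleton (b.ne_zero i), b.linearIndependent.iSupIndep_span_singleton, by
    rw [← span_range_eq_iSup, b.span_eq]⟩

theorem exists_isFrame_of_linearIndepOn {K E : Type*} [Field K] [AddCommGroup E] [Module K E]
    [FiniteDimensional K E] {B : Set E} (hB : LinearIndepOn K id B) (hspan : span K B = ⊤) :
    ∃ L : Fin (Module.finrank K E) → Submodule K E, IsFrame K L ∧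
      ∀ W : Submodule K E, span K (B ∩ W) = W →
        ∃ s : Finset (Fin (Module.finrank K E)), W = ⨆ i ∈ s, L i := by
  classical
  let b₀ : Module.Basis B K E := .mk hB (by simp [hspan])
  let b := b₀.reindex (b₀.indexEquiv (Module.finBasis K E))
  have hrange : Set.range b = B := by simp [b, b₀]
  refine ⟨_, isFrame_span_singleton b, fun W hW ↦ ⟨Finset.univ.filter (b · ∈ W), ?_⟩⟩
  simpa [hrange, hW] using span_range_inter_eq_iSup b W

theorem stmt5_general {K E ι ι' : Type*} [DivisionRing K] [AddCommGroup E] [Module K E]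
    [LinearOrder ι] [WellFoundedLT ι] [LinearOrder ι'] [WellFoundedLT ι']
    {F : ι → Submodule K E} {F' : ι' → Submodule K E} (hF : Monotone F) (hF' : Monotone F') :
    ∃ B : Set E, LinearIndepOn K id B ∧ span K B = ⊤ ∧
      (∀ i, span K (B ∩ F i) = F i) ∧ (∀ j, span K (B ∩ F' j) = F' j) := by
  obtain ⟨_, _⟩ := exists_wellFoundedLT E
  obtain ⟨ν, hν⟩ := exists_isLevel_recTopCoe hF
  obtain ⟨ν', hν'⟩ := exists_isLevel_recTopCoe hF'
  have hBF := span_greedyBasis_lexLevel_inter_right hν' hν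
  have hBF' := span_greedyBasis_lexLevel_inter_left hν' ν
  have hspan : span K (greedyBasis K (lexLevel ν' ν)) = ⊤ := by
    simpa only [WithTop.recTopCoe_top, top_coe, Set.inter_univ] using hBF ⊤
  exact ⟨_, linearIndepOn_greedyBasis (lexLevel_injective ν' ν), hspan,
    fun i ↦ hBF i, fun j ↦ hBF' j⟩

/-- Given two flags `{0} ⊊ F₁ ⊊ ⋯ ⊊ F_m = E` and `{0} ⊊ F'₁ ⊊ ⋯ ⊊ F'_{m'} = E`, there is a
frame `L = (L₁, …, L_r)` for `E` (`r = dim E`) such that every `F j` and every `F' j` is a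
sum of some of the `L i`. -/
theorem stmt5 (K E : Type*) [Field K] [AddCommGroup E] [Module K E] [FiniteDimensional K E]
    (m m' : ℕ) (hm : 0 < m) (hm' : 0 < m')
    (F : Fin m → Submodule K E) (F' : Fin m' → Submodule K E)
    (hF : StrictMono F) (hF' : StrictMono F')
    (hFbot : ⊥ < F ⟨0, hm⟩) (hFtop : F ⟨m - 1, by omega⟩ = ⊤)
    (hF'bot : ⊥ < F' ⟨0, hm'⟩) (hF'top : F' ⟨m' - 1, by omega⟩ = ⊤) :
    ∃ L : Fin (Module.finrank K E) → Submodule K E, IsFrame K L ∧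
      (∀ j : Fin m, ∃ s : Finset (Fin (Module.finrank K E)), F j = ⨆ i ∈ s, L i) ∧
      (∀ j : Fin m', ∃ s : Finset (Fin (Module.finrank K E)), F' j = ⨆ i ∈ s, L i) := by
  obtain ⟨B, hB, hspan, hBF, hBF'⟩ := stmt5_general hF.monotone hF'.monotone
  obtain ⟨L, hL, hadapted⟩ := exists_isFrame_of_linearIndepOn hB hspan
  exact ⟨L, hL, fun j ↦ hadapted _ (hBF j), fun j ↦ hadapted _ (hBF' j)⟩
end

section
/- Any two valuations on E are adapted to a common frame: for any valuations v, w : E → ℝ ∪ {∞} there exists a single frame L = (L₁, …, L_r) for E such that both v and w are adapted to L. -/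
/-!
The subspaces `E_{v ≥ t}` form a chain, so it suffices to split two chains `C` and `D` of subspaces
by one frame. Induct on the dimension: take a hyperplane `H` containing every proper member of `C`,
and a line `l ⊄ H` inside the smallest member of `D` not contained in `H`. Every member of either
chain is contained in `H` or contains `l`, and by the modular law a member `A ⊇ l` is
`(A ∩ H) ⊕ l`; hence adding `l` to a frame of `H` splitting both chains gives such a frame of `E`.
Only the lattice of subspaces enters, with the lines as its atoms.
-/

section Chain

variable {α : Type*} [PartialOrder α] {s : Set α}

theorem exists_isLeast_of_isChain [WellFoundedLT α] (hs : IsChain (· ≤ ·) s)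
    (hne : s.Nonempty) : ∃ m, IsLeast s m := by
  obtain ⟨m, hm⟩ := exists_minimal_of_wellFoundedLT (· ∈ s) hne
  exact ⟨m, hm.prop, fun x hx => (hs.total hm.prop hx).elim id (hm.le_of_le hx)⟩

theorem exists_isGreatest_of_isChain [WellFoundedGT α] (hs : IsChain (· ≤ ·) s)
    (hne : s.Nonempty) : ∃ m, IsGreatest s m :=
  exists_isLeast_of_isChain (α := αᵒᵈ) hs.symm hne

end Chain

section Lattice

variable {α : Type*}

theorem exists_covBy_forall_le_or_inf_le [SemilatticeInf α] [OrderBot α] [WellFoundedGT α]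
    {C : Set α} (hC : IsChain (· ≤ ·) C) {u : α} (hu : u ≠ ⊥) :
    ∃ h, h ⋖ u ∧ ∀ c ∈ C, u ≤ c ∨ u ⊓ c ≤ h := by
  have hchain : IsChain (· ≤ ·) {c ∈ insert ⊥ C | ¬u ≤ c} :=
    (hC.insert fun _ _ _ => .inl bot_le).mono (Set.sep_subset _ _)
  obtain ⟨m, ⟨-, hum⟩, hm⟩ :=
    exists_isGreatest_of_isChain hchain ⟨⊥, Set.mem_insert _ _, fun h => hu (le_bot_iff.1 h)⟩
  obtain ⟨h, hmh, hhu⟩ := exists_le_covBy_of_lt (inf_lt_left.2 hum)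
  refine ⟨h, hhu, fun c hc => or_iff_not_imp_left.2 fun huc => ?_⟩
  exact (inf_le_inf_left u (hm ⟨Set.mem_insert_of_mem _ hc, huc⟩)).trans hmh

theorem exists_isAtom_forall_inf_le_or_le [SemilatticeInf α] [BoundedOrder α] [IsAtomistic α]
    [WellFoundedLT α] {D : Set α} (hD : IsChain (· ≤ ·) D) {h u : α} (hu : ¬u ≤ h) :
    ∃ a, IsAtom a ∧ a ≤ u ∧ ¬a ≤ h ∧ ∀ d ∈ D, u ⊓ d ≤ h ∨ a ≤ d := by
  have hchain : IsChain (· ≤ ·) {d ∈ insert ⊤ D | ¬u ⊓ d ≤ h} :=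
    (hD.insert fun _ _ _ => .inr le_top).mono (Set.sep_subset _ _)
  obtain ⟨m, ⟨-, hmh⟩, hm⟩ :=
    exists_isLeast_of_isChain hchain ⟨⊤, Set.mem_insert _ _, by rwa [inf_top_eq]⟩
  obtain ⟨a, ha, ham, hah⟩ : ∃ a, IsAtom a ∧ a ≤ u ⊓ m ∧ ¬a ≤ h := by
    by_contra! hall
    exact hmh (le_iff_atom_le_imp.2 hall)
  refine ⟨a, ha, ham.trans inf_le_left, hah, fun d hd => or_iff_not_imp_left.2 fun hdh => ?_⟩
  exact ham.trans (inf_le_right.trans (hm ⟨Set.mem_insert_of_mem _ hd, hdh⟩))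

theorem sup_inf_eq_inf_or_eq_sup_inf [Lattice α] [IsModularLattice α] {a b h : α}
    (hb : (a ⊔ h) ⊓ b ≤ h ∨ a ≤ b) : (a ⊔ h) ⊓ b = h ⊓ b ∨ (a ⊔ h) ⊓ b = a ⊔ h ⊓ b :=
  hb.imp (fun hbh => le_antisymm (le_inf hbh inf_le_right) (inf_le_inf_right b le_sup_right))
    (sup_inf_assoc_of_le h)

theorem sSupIndep_insert [CompleteLattice α] [IsModularLattice α] {s : Set α} {a : α}
    (hs : sSupIndep s) (ha : Disjoint a (sSup s)) : sSupIndep (insert a s) := by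
  rintro x (rfl | hx)
  · exact ha.mono_right (sSup_le_sSup (by simp))
  · have hxs : Disjoint (x ⊔ sSup (s \ {x})) a :=
      ha.symm.mono_left (sup_le (le_sSup hx) (sSup_le_sSup Set.sdiff_subset))
    refine ((hs hx).disjoint_sup_right_of_disjoint_sup_left hxs).mono_right ?_
    rw [sup_comm, ← sSup_insert]
    exact sSup_le_sSup Set.insert_sdiff_subset

theorem exists_sSupIndep_isAtom_of_isChain [CompleteLattice α] [IsModularLattice α]
    [IsAtomistic α] [WellFoundedLT α] [WellFoundedGT α] {C D : Set α}
    (hC : IsChain (· ≤ ·) C) (hD : IsChain (· ≤ ·) D) (u : α) :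
    ∃ s : Set α, sSupIndep s ∧ (∀ a ∈ s, IsAtom a) ∧ sSup s = u ∧
      ∀ b ∈ C ∪ D, ∃ t ⊆ s, sSup t = u ⊓ b := by
  induction u using WellFoundedLT.induction with | ind u ih =>
  obtain rfl | hu := eq_or_ne u ⊥
  · exact ⟨∅, sSupIndep_empty, by simp, sSup_empty, fun b _ => ⟨∅, subset_rfl, by simp⟩⟩
  obtain ⟨h, hhu, hCh⟩ := exists_covBy_forall_le_or_inf_le hC hu
  obtain ⟨a, ha, hau, hah, hDa⟩ := exists_isAtom_forall_inf_le_or_le hD hhu.lt.not_ge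
  obtain ⟨s, hind, hatom, rfl, hs⟩ := ih h hhu.lt
  have hsup : a ⊔ sSup s = u := (hhu.eq_or_eq le_sup_right (sup_le hau hhu.le)).resolve_left
    fun heq => hah (le_sup_left.trans_eq heq)
  refine ⟨insert a s, sSupIndep_insert hind (ha.not_le_iff_disjoint.1 hah),
    Set.forall_mem_insert.2 ⟨ha, hatom⟩, sSup_insert.trans hsup, fun b hb => ?_⟩
  have hdich : u ⊓ b ≤ sSup s ∨ a ≤ b :=
    hb.elim (fun hbC => (hCh b hbC).symm.imp_right hau.trans) (hDa b)
  rw [← hsup] at hdich ⊢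
  obtain ⟨t, hts, ht⟩ := hs b hb
  obtain hub | hub := sup_inf_eq_inf_or_eq_sup_inf hdich
  · exact ⟨t, hts.trans (Set.subset_insert a s), ht.trans hub.symm⟩
  · exact ⟨insert a t, Set.insert_subset_insert hts, by rw [sSup_insert, ht, hub]⟩

end Lattice

section VectorSpace

open Module

variable {K E : Type*}

theorem finrank_eq_card_of_iSupIndep [DivisionRing K] [AddCommGroup E] [Module K E]
    {ι : Type*} [Fintype ι] {L : ι → Submodule K E} (hL : ∀ i, finrank K (L i) = 1)
    (hind : iSupIndep L) (htop : ⨆ i, L i = ⊤) : finrank K E = Fintype.card ι := by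
  classical
  have : ∀ i, Module.Finite K (L i) := fun i => Module.finite_of_finrank_eq_succ (hL i)
  have hint := DirectSum.isInternal_submodule_of_iSupIndep_of_iSup_eq_top hind htop
  rw [← (LinearEquiv.ofBijective (DirectSum.coeLinearMap L) hint).finrank_eq, finrank_directSum]
  simp [hL]

theorem stmt7_general [DivisionRing K] [AddCommGroup E] [Module K E] [FiniteDimensional K E]
    {C D : Set (Submodule K E)} (hC : IsChain (· ≤ ·) C) (hD : IsChain (· ≤ ·) D) :
    ∃ L : Fin (finrank K E) → Submodule K E,
      ((∀ i, finrank K (L i) = 1) ∧ iSupIndep L ∧ ⨆ i, L i = ⊤) ∧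
      ∀ A ∈ C ∪ D, ∃ s : Finset (Fin (finrank K E)), A = ⨆ i ∈ s, L i := by
  classical
  obtain ⟨S, hind, hatom, htop, hS⟩ := exists_sSupIndep_isAtom_of_isChain hC hD ⊤
  have := (WellFoundedGT.finite_of_sSupIndep hind).fintype
  rw [sSupIndep_iff] at hind
  rw [sSup_eq_iSup'] at htop
  have hline (A : S) : finrank K A = 1 := Submodule.isAtom_iff_finrank_eq_one.1 (hatom A A.2)
  let e : Fin (finrank K E) ≃ S :=
    (Fintype.equivFinOfCardEq (finrank_eq_card_of_iSupIndep hline hind htop).symm).symm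
  let L (i : Fin (finrank K E)) : Submodule K E := e i
  have hLtop : ⨆ i, L i = ⊤ := (e.iSup_comp (g := Subtype.val)).trans htop
  refine ⟨L, ⟨fun i => hline (e i), hind.comp e.injective, hLtop⟩, fun A hA => ?_⟩
  obtain ⟨t, htS, ht⟩ := hS A hA
  have himage : L '' {i | L i ∈ t} = t :=
    Set.image_preimage_eq_of_subset fun B hB => ⟨e.symm ⟨B, htS hB⟩, by simp [L]⟩
  refine ⟨Finset.univ.filter (L · ∈ t), ?_⟩
  calc A = sSup t := by rw [ht, top_inf_eq]
    _ = ⨆ i ∈ {i | L i ∈ t}, L i := by rw [← sSup_image, himage]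
    _ = ⨆ i ∈ Finset.univ.filter (L · ∈ t), L i := by simp

variable [Field K] [AddCommGroup E] [Module K E] {v : E → WithTop ℝ}

namespace IsVSValuation

/-- The subspace `E_{v ≥ t}` of a valuation `v`; the threshold `t = ∞` is allowed. -/
def superlevel (hv : IsVSValuation K v) (t : WithTop ℝ) : Submodule K E where
  carrier := {e | t ≤ v e}
  zero_mem' := le_top.trans_eq ((hv.2.2 0).2 rfl).symm
  add_mem' ha hb := (le_min ha hb).trans (hv.2.1 _ _)
  smul_mem' c e he := by
    obtain rfl | hc := eq_or_ne c 0
    · exact le_top.trans_eq ((hv.2.2 _).2 (zero_smul K e)).symm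
    · exact le_of_le_of_eq he (hv.1 c e hc).symm

theorem superlevel_antitone (hv : IsVSValuation K v) : Antitone hv.superlevel :=
  fun _ _ hst _ he => hst.trans he

theorem isAdapted (hv : IsVSValuation K v) {r : ℕ} {L : Fin r → Submodule K E}
    (hL : ∀ A ∈ Set.range hv.superlevel, ∃ s : Finset (Fin r), A = ⨆ i ∈ s, L i) :
    IsAdapted v L := fun t =>
  (hL _ ⟨t, rfl⟩).imp fun _ hs => congrArg SetLike.coe hs

end IsVSValuation

end VectorSpace

/-- Any two valuations on a finite-dimensional vector space `E` are adapted to a common frame. -/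
theorem stmt7 (K E : Type*) [Field K] [AddCommGroup E] [Module K E] [FiniteDimensional K E]
    (v w : E → WithTop ℝ) (hv : IsVSValuation K v) (hw : IsVSValuation K w) :
    ∃ L : Fin (Module.finrank K E) → Submodule K E, IsFrame K L ∧ IsAdapted v L ∧ IsAdapted w L := by
  obtain ⟨L, hL, hadapt⟩ := stmt7_general hv.superlevel_antitone.isChain_range
    hw.superlevel_antitone.isChain_range
  exact ⟨L, hL, hv.isAdapted fun A hA => hadapt A (.inl hA),
    hw.isAdapted fun A hA => hadapt A (.inr hA)⟩
end

section
/- Let L = (L₁, …, L_r) and L' = (L'₁, …, L'_r) be two frames for E. Then there exists a permutation π of {1, …, r} such that the induced identification of adapted valuations fixes every valuation adapted to both frames: for every a = (a₁, …, a_r) ∈ ℝ^r, if the valuation v_{L,a} is also adapted to L' (i.e., v_{L,a} = v_{L',b} for some b ∈ ℝ^r), then v_{L,a} = v_{L',a∘π⁻¹}, where (a∘π⁻¹)_j = a_{π⁻¹(j)}. -/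
open scoped Classical

/-- `v` is the function `v_{L,a}`: it sends `0` to `∞` and a nonzero `e = Σᵢ eᵢ`
(`eᵢ ∈ Lᵢ`) to `min {aᵢ : eᵢ ≠ 0}`. -/
def IsMinValFun {K E : Type*} [Field K] [AddCommGroup E] [Module K E]
    {r : ℕ} (L : Fin r → Submodule K E) (a : Fin r → ℝ) (v : E → WithTop ℝ) : Prop :=
  v 0 = ⊤ ∧
  ∀ c : Fin r → E, (∀ i, c i ∈ L i) → (∑ i, c i) ≠ 0 →
    v (∑ i, c i) =
      (Finset.univ.filter fun i => c i ≠ 0).inf fun i => ((a i : ℝ) : WithTop ℝ)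

/-!
If a valuation `v = v_{L,a} = v_{L',b}` is adapted to both frames, then `v` takes the value `aᵢ`
at a generator of `Lᵢ`, so `aᵢ ≤ bⱼ` whenever this generator has a nonzero component in `L'ⱼ`; and
likewise with the two frames exchanged. By Hall's theorem one can choose such a `j = f i`
injectively in `i`, and such an `i = g j` injectively in `j`; both choices depend on the frames
only. Then `a ≤ b ∘ f ≤ a ∘ g ∘ f`, and going around the cycles of the permutation `g ∘ f` turns all
these inequalities into equalities.
-/

theorem eq_comp_of_le_comp {ι κ Γ : Type*} [Finite ι] [PartialOrder Γ] {a : ι → Γ} {b : κ → Γ}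
    {f : ι → κ} {g : κ → ι} (hgf : Function.Injective (g ∘ f)) (hab : a ≤ b ∘ f)
    (hba : b ≤ a ∘ g) : a = b ∘ f := by
  funext i
  obtain ⟨n, hn, hni⟩ := hgf.mem_periodicPts i
  have hmono : Monotone fun m => a ((g ∘ f)^[m] i) := monotone_nat_of_le_succ fun m => by
    rw [Function.iterate_succ_apply']
    exact (hab _).trans (hba _)
  refine (hab i).antisymm ?_
  calc
    b (f i) ≤ a ((g ∘ f)^[1] i) := hba (f i)
    _ ≤ a ((g ∘ f)^[n] i) := hmono hn
    _ = a i := congrArg a hni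

section Basis

variable {ι κ R M Γ : Type*} [Semiring R] [AddCommMonoid M] [Module R M]

theorem exists_injective_repr_ne_zero [StrongRankCondition R] {v : ι → M}
    (hv : LinearIndependent R v) (B : Module.Basis κ R M) :
    ∃ f : ι → κ, Function.Injective f ∧ ∀ i, B.repr (v i) (f i) ≠ 0 := by
  let supp (i : ι) : Finset κ := (B.repr (v i)).support
  have hall (s : Finset ι) : s.card ≤ (s.biUnion supp).card := by
    have hspan : Set.range (fun i : s => v i) ≤
        Submodule.span R (((s.biUnion supp).image B : Finset M) : Set M) := by
      rintro _ ⟨i, rfl⟩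
      rw [Finset.coe_image]
      exact Submodule.span_mono (Set.image_mono (Finset.subset_biUnion_of_mem supp i.2))
        (B.mem_span_repr_support (v i))
    have hcard := linearIndependent_le_span' _ (hv.comp _ Subtype.val_injective) _ hspan
    simp only [Cardinal.mk_coe_finset, Finset.coe_sort_coe, Fintype.card_coe, Nat.cast_le] at hcard
    exact hcard.trans Finset.card_image_le
  simpa only [supp, Finsupp.mem_support_iff] using
    (Finset.all_card_le_biUnion_card_iff_exists_injective supp).mp hall

/-- The valuation `v_{L,a}` of the frame of lines spanned by a basis. `⊤ : WithTop Γ` stands for `∞`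
and is the value at `0` because it is the infimum over the empty support. -/
noncomputable def basisMinVal [SemilatticeInf Γ] (B : Module.Basis ι R M) (a : ι → Γ) (e : M) :
    WithTop Γ :=
  (B.repr e).support.inf fun i => (a i : WithTop Γ)

variable [SemilatticeInf Γ]

theorem basisMinVal_basis [Nontrivial R] (B : Module.Basis ι R M) (a : ι → Γ) (i : ι) :
    basisMinVal B a (B i) = a i := by
  rw [basisMinVal, B.repr_self, Finsupp.support_single _ one_ne_zero, Finset.inf_singleton]

theorem basisMinVal_le (B : Module.Basis ι R M) (a : ι → Γ) {e : M} {i : ι}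
    (hi : B.repr e i ≠ 0) : basisMinVal B a e ≤ a i :=
  Finset.inf_le (Finsupp.mem_support_iff.mpr hi)

theorem le_of_basisMinVal_eq [Nontrivial R] {B : Module.Basis ι R M} {B' : Module.Basis κ R M}
    {a : ι → Γ} {b : κ → Γ} (h : basisMinVal B a = basisMinVal B' b) {i : ι} {j : κ}
    (hij : B'.repr (B i) j ≠ 0) : a i ≤ b j := by
  rw [← WithTop.coe_le_coe, ← basisMinVal_basis B a i, h]
  exact basisMinVal_le B' b hij

theorem stmt9_general [Finite ι] [StrongRankCondition R] (B B' : Module.Basis ι R M) :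
    ∃ π : Equiv.Perm ι, ∀ a b : ι → Γ,
      basisMinVal B a = basisMinVal B' b → b = fun j => a (π.symm j) := by
  have := nontrivial_of_invariantBasisNumber R
  obtain ⟨f, hf, hBf⟩ := exists_injective_repr_ne_zero B.linearIndependent B'
  obtain ⟨g, hg, hBg⟩ := exists_injective_repr_ne_zero B'.linearIndependent B
  let π : Equiv.Perm ι := Equiv.ofBijective f (Finite.injective_iff_bijective.mp hf)
  refine ⟨π, fun a b h => ?_⟩
  have hab : a = b ∘ f := eq_comp_of_le_comp (hg.comp hf)
    (fun i => le_of_basisMinVal_eq h (hBf i)) (fun j => le_of_basisMinVal_eq h.symm (hBg j))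
  funext j
  rw [hab]
  exact congrArg b (π.apply_symm_apply j).symm

end Basis

section Frame

variable {K E : Type*} [Field K] [AddCommGroup E] [Module K E] {r : ℕ} {L : Fin r → Submodule K E}

theorem IsFrame.exists_basis_mem (hL : IsFrame K L) :
    ∃ B : Module.Basis (Fin r) K E, ∀ i, B i ∈ L i := by
  obtain ⟨hrank, hindep, htop⟩ := hL
  have hint := DirectSum.isInternal_submodule_of_iSupIndep_of_iSup_eq_top hindep htop
  obtain ⟨B, hB⟩ : ∃ B : Module.Basis (Σ _ : Fin r, Unit) K E, ∀ p, B p ∈ L p.1 :=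
    ⟨_, hint.collectedBasis_mem fun i => Module.basisUnique Unit (hrank i)⟩
  refine ⟨B.reindex (Equiv.sigmaUnique _ _), fun i => ?_⟩
  rw [Module.Basis.reindex_apply]
  exact hB ⟨i, ()⟩

theorem IsMinValFun.eq_basisMinVal {a : Fin r → ℝ} {v : E → WithTop ℝ} (hv : IsMinValFun L a v)
    {B : Module.Basis (Fin r) K E} (hB : ∀ i, B i ∈ L i) : v = basisMinVal B a := by
  funext e
  obtain rfl | he := eq_or_ne e 0
  · simp [basisMinVal, hv.1]
  · have hsum := B.sum_repr e
    have hve := hv.2 (fun i => B.repr e i • B i) (fun i => (L i).smul_mem _ (hB i))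
      (hsum.trans_ne he)
    rw [hsum] at hve
    rw [hve, basisMinVal]
    congr 1
    ext i
    simp [B.ne_zero i]

end Frame

/-- Given two frames `L`, `L'` for `E`, there is a permutation `π` of `{1, …, r}` such that
the induced identification of adapted valuations fixes every valuation adapted to both
frames: for every `a ∈ ℝ^r`, if `v_{L,a}` is also adapted to `L'` (i.e. equals `v_{L',b}`
for some `b`), then `v_{L,a} = v_{L', a ∘ π⁻¹}`. -/
theorem stmt9 (K E : Type*) [Field K] [AddCommGroup E] [Module K E] [FiniteDimensional K E]
    (r : ℕ) (L L' : Fin r → Submodule K E)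
    (hL : IsFrame K L) (hL' : IsFrame K L') :
    ∃ π : Equiv.Perm (Fin r),
      ∀ (a : Fin r → ℝ) (v : E → WithTop ℝ),
        IsMinValFun L a v →
        (∃ b : Fin r → ℝ, IsMinValFun L' b v) →
        IsMinValFun L' (fun j => a (π.symm j)) v := by
  obtain ⟨B, hB⟩ := hL.exists_basis_mem
  obtain ⟨B', hB'⟩ := hL'.exists_basis_mem
  obtain ⟨π, hπ⟩ := stmt9_general (Γ := ℝ) B B'
  refine ⟨π, fun a v ha ⟨b, hb⟩ => ?_⟩
  rwa [← hπ a b ((ha.eq_basisMinVal hB).symm.trans (hb.eq_basisMinVal hB'))]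
end

section
/- Let π : E → Γ be a finite semilattice valuation, i.e., there is a finite subset Γ₀ ⊆ Γ containing the image of π and closed under the meet operation ∧. Then for every γ ∈ Γ there exists γ' ∈ Γ₀ such that E_{≥γ} = E_{≥γ'}; consequently, the collection of subspaces {E_{≥γ} : γ ∈ Γ} is a finite set. -/
/-!
The subset `E_{≥γ}` depends only on which of the finitely many values of `π` lie above `γ`, so there
are finitely many such subsets. Replacing `γ` by the meet `γ'` of these values does not change which
values lie above it, and `γ'` belongs to every meet-closed set containing `⊤` and the values of `π`.
-/

open Set

theorem finite_range_preimage {α β : Type*} {f : α → β} (hf : (range f).Finite) :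
    (range (preimage f)).Finite := by
  refine (hf.powerset.image (preimage f)).subset ?_
  rintro _ ⟨s, rfl⟩
  exact ⟨range f ∩ s, inter_subset_left, preimage_range_inter⟩

theorem preimage_Ici_eq_of_isGLB {α β : Type*} [Preorder β] {f : α → β} {a b : β}
    (hb : IsGLB (range f ∩ Ici a) b) : f ⁻¹' Ici a = f ⁻¹' Ici b := by
  have hab : a ≤ b := hb.2 fun _ hc ↦ hc.2
  ext x
  exact ⟨fun hx ↦ hb.1 ⟨mem_range_self x, hx⟩, hab.trans⟩

theorem exists_mem_isGLB_of_finite {β : Type*} [SemilatticeInf β] [OrderTop β] {s t : Set β}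
    (hs : InfClosed s) (htop : ⊤ ∈ s) (ht : t.Finite) (hts : t ⊆ s) : ∃ b ∈ s, IsGLB t b := by
  lift t to Finset β using ht
  exact ⟨t.inf id, Finset.inf_mem s htop (fun _ hx _ hy ↦ hs hx hy) _ _ hts, Finset.isGLB_inf_id⟩

theorem stmt11_general {α Γ : Type*} [SemilatticeInf Γ] [OrderTop Γ] {π : α → Γ}
    (hπ : (range π).Finite) {Γ₀ : Set Γ} (hΓ₀ : InfClosed Γ₀) (htop : ⊤ ∈ Γ₀)
    (him : range π ⊆ Γ₀) :
    (∀ γ : Γ, ∃ γ' ∈ Γ₀, {x : α | γ ≤ π x} = {x : α | γ' ≤ π x}) ∧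
    {S : Set α | ∃ γ : Γ, S = {x : α | γ ≤ π x}}.Finite := by
  refine ⟨fun γ ↦ ?_, ?_⟩
  · obtain ⟨γ', hγ', hglb⟩ := exists_mem_isGLB_of_finite hΓ₀ htop (hπ.inter_of_left (Ici γ))
      (inter_subset_left.trans him)
    exact ⟨γ', hγ', preimage_Ici_eq_of_isGLB hglb⟩
  · refine (finite_range_preimage hπ).subset ?_
    rintro _ ⟨γ, rfl⟩
    exact ⟨Ici γ, rfl⟩

/-- Let `π : E → Γ` be a semilattice valuation on `E` with values in a meet-semilattice `Γ`
with maximum element `⊤`, and suppose `π` is finite: there is a finite subset `Γ₀ ⊆ Γ`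
containing the image of `π` and closed under meets.  Then for every `γ ∈ Γ` there is
`γ' ∈ Γ₀` with `E_{≥γ} = E_{≥γ'}`; consequently `{E_{≥γ} : γ ∈ Γ}` is a finite collection. -/
theorem stmt11 (K E Γ : Type*) [Field K] [AddCommGroup E] [Module K E]
    [SemilatticeInf Γ] [OrderTop Γ]
    (π : E → Γ)
    (hsc : ∀ (c : K) (e : E), c ≠ 0 → π (c • e) = π e)
    (hadd : ∀ e₁ e₂ : E, π e₁ ⊓ π e₂ ≤ π (e₁ + e₂))
    (htop : ∀ e : E, π e = ⊤ ↔ e = 0)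
    (Γ₀ : Set Γ) (hfin : Γ₀.Finite) (him : Set.range π ⊆ Γ₀)
    (hmeet : ∀ x ∈ Γ₀, ∀ y ∈ Γ₀, x ⊓ y ∈ Γ₀) :
    (∀ γ : Γ, ∃ γ' ∈ Γ₀, {e : E | γ ≤ π e} = {e : E | γ' ≤ π e}) ∧
    {S : Set E | ∃ γ : Γ, S = {e : E | γ ≤ π e}}.Finite := by
  exact stmt11_general (hfin.subset him) (fun _ hx _ hy ↦ hmeet _ hx _ hy)
    (him ⟨0, (htop 0).2 rfl⟩) him
end
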